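/- arXiv:0710.5041 — 2 statements merged into one kernel-verified Lean document; each statement's English description precedes it below -/
import Mathlib

section
/- Let E be a real inner product space of finite dimension n ≥ 1, let B : E → E be a self-adjoint linear operator, and let k, ε be real numbers with 0 ≤ ε ≤ k. Assume ‖B(v) - k·v‖ ≤ ε·‖v‖ for every v ∈ E. Then for every v ∈ E, the 'Ricci' quadratic form Q(v) := (tr B)·⟨B(v), v⟩ - ‖B(v)‖² satisfies n(k-ε)²‖v‖² - (k+ε)²‖v‖² ≤ Q(v) ≤ n(k+ε)²‖v‖² - (k-ε)²‖v‖², and in particular |Q(v) - (n-1)k²‖v‖²| ≤ ((2n+2)kε + (n-1)ε²)·‖v‖². (This is the pointwise estimate showing that an almost-umbilic hypersurface is almost-Einstein, used in the proof of Theorem 3 of the paper, where B is the shape operator and Q(v) = Ric(v,v) by the Gauss equation Ric(Y,Y) = nH⟨B(Y),Y⟩ - ⟨B(Y),B(Y)⟩ with nH = tr B.) -/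
open scoped RealInnerProductSpace

/-! Almost-umbilicity confines the numerical range of `B` to `[k - ε, k + ε]` and its norm to at
most `k + ε`. Summing the numerical range over an orthonormal basis confines `tr B` to
`n [k - ε, k + ε]`. Since `0 ≤ k - ε`, the bounds on `tr B` and on `⟪B v, v⟫` may be multiplied,
while Cauchy-Schwarz turns the lower bound on `⟪B v, v⟫` into the one on `‖B v‖`. -/

open Module (finrank)

section InnerBounds

variable {E : Type*} [NormedAddCommGroup E] [InnerProductSpace ℝ E]

theorem sub_mul_norm_sq_le_inner_of_norm_sub_smul_le {u v : E} {k ε : ℝ}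
    (h : ‖u - k • v‖ ≤ ε * ‖v‖) : (k - ε) * ‖v‖ ^ 2 ≤ ⟪u, v⟫ := by
  have hdefect : -(‖u - k • v‖ * ‖v‖) ≤ ⟪u - k • v, v⟫ :=
    neg_le_of_abs_le (abs_real_inner_le_norm _ _)
  rw [inner_sub_left, real_inner_smul_left, real_inner_self_eq_norm_sq] at hdefect
  linarith [mul_le_mul_of_nonneg_right h (norm_nonneg v)]

theorem inner_le_mul_norm_sq_of_norm_le {u v : E} {b : ℝ} (h : ‖u‖ ≤ b * ‖v‖) :
    ⟪u, v⟫ ≤ b * ‖v‖ ^ 2 :=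
  calc
    ⟪u, v⟫ ≤ ‖u‖ * ‖v‖ := real_inner_le_norm u v
    _ ≤ b * ‖v‖ * ‖v‖ := by gcongr
    _ = b * ‖v‖ ^ 2 := by ring

theorem mul_norm_le_norm_of_mul_norm_sq_le_inner {u v : E} {a : ℝ}
    (h : a * ‖v‖ ^ 2 ≤ ⟪u, v⟫) : a * ‖v‖ ≤ ‖u‖ := by
  rcases eq_or_ne v 0 with rfl | hv
  · simp
  · refine le_of_mul_le_mul_right ?_ (norm_pos_iff.mpr hv)
    calc
      a * ‖v‖ * ‖v‖ = a * ‖v‖ ^ 2 := by ring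
      _ ≤ ⟪u, v⟫ := h
      _ ≤ ‖u‖ * ‖v‖ := real_inner_le_norm u v

end InnerBounds

theorem norm_le_add_mul_norm_of_norm_sub_smul_le {E : Type*} [SeminormedAddCommGroup E]
    [NormedSpace ℝ E] {u v : E} {k ε : ℝ} (hk : 0 ≤ k) (h : ‖u - k • v‖ ≤ ε * ‖v‖) :
    ‖u‖ ≤ (k + ε) * ‖v‖ :=
  calc
    ‖u‖ ≤ ‖k • v‖ + ‖u - k • v‖ := norm_le_norm_add_norm_sub' u (k • v)
    _ ≤ k * ‖v‖ + ε * ‖v‖ := by rw [norm_smul_of_nonneg hk]; gcongr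
    _ = (k + ε) * ‖v‖ := by ring

section Trace

variable {E : Type*} [NormedAddCommGroup E] [InnerProductSpace ℝ E] [FiniteDimensional ℝ E]
  {B : E →ₗ[ℝ] E}

theorem finrank_mul_le_trace {a : ℝ} (h : ∀ v, a * ‖v‖ ^ 2 ≤ ⟪B v, v⟫) :
    finrank ℝ E * a ≤ LinearMap.trace ℝ E B := by
  let e := stdOrthonormalBasis ℝ E
  calc
    finrank ℝ E * a = ∑ _i : Fin (finrank ℝ E), a := by simp
    _ ≤ ∑ i, ⟪e i, B (e i)⟫ := Finset.sum_le_sum fun i _ ↦ by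
      simpa [real_inner_comm] using h (e i)
    _ = LinearMap.trace ℝ E B := (LinearMap.trace_eq_sum_inner B e).symm

theorem trace_le_finrank_mul {b : ℝ} (h : ∀ v, ⟪B v, v⟫ ≤ b * ‖v‖ ^ 2) :
    LinearMap.trace ℝ E B ≤ finrank ℝ E * b := by
  simpa using finrank_mul_le_trace (B := -B) (a := -b) (by simpa using h)

end Trace

section RicciForm

variable {E : Type*} [NormedAddCommGroup E] [InnerProductSpace ℝ E]

/-- The quadratic form `v ↦ Ric(v, v)` that the once-traced Gauss equation assigns to a shape
operator `B`, with `tr B` standing for `n` times the mean curvature. -/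
noncomputable def ricciForm (B : E →ₗ[ℝ] E) (v : E) : ℝ :=
  LinearMap.trace ℝ E B * ⟪B v, v⟫ - ‖B v‖ ^ 2

variable [FiniteDimensional ℝ E] {B : E →ₗ[ℝ] E} {a b : ℝ}

theorem le_ricciForm (ha : 0 ≤ a) (hlower : ∀ v, a * ‖v‖ ^ 2 ≤ ⟪B v, v⟫)
    {v : E} (hv : ‖B v‖ ≤ b * ‖v‖) :
    finrank ℝ E * a ^ 2 * ‖v‖ ^ 2 - b ^ 2 * ‖v‖ ^ 2 ≤ ricciForm B v := by
  have htrace : finrank ℝ E * a ≤ LinearMap.trace ℝ E B := finrank_mul_le_trace hlower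
  have htrace_nonneg : 0 ≤ LinearMap.trace ℝ E B := le_trans (by positivity) htrace
  calc
    finrank ℝ E * a ^ 2 * ‖v‖ ^ 2 - b ^ 2 * ‖v‖ ^ 2
      = (finrank ℝ E * a) * (a * ‖v‖ ^ 2) - (b * ‖v‖) ^ 2 := by ring
    _ ≤ LinearMap.trace ℝ E B * ⟪B v, v⟫ - ‖B v‖ ^ 2 := by gcongr; exact hlower v

theorem ricciForm_le (ha : 0 ≤ a) (hlower : ∀ v, a * ‖v‖ ^ 2 ≤ ⟪B v, v⟫)
    (hupper : ∀ v, ‖B v‖ ≤ b * ‖v‖) (v : E) :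
    ricciForm B v ≤ finrank ℝ E * b ^ 2 * ‖v‖ ^ 2 - a ^ 2 * ‖v‖ ^ 2 := by
  have hinner (w : E) : ⟪B w, w⟫ ≤ b * ‖w‖ ^ 2 := inner_le_mul_norm_sq_of_norm_le (hupper w)
  have hinner_nonneg : 0 ≤ ⟪B v, v⟫ := le_trans (by positivity) (hlower v)
  have htrace : LinearMap.trace ℝ E B ≤ finrank ℝ E * b := trace_le_finrank_mul hinner
  have htrace_nonneg : 0 ≤ LinearMap.trace ℝ E B :=
    le_trans (by positivity) (finrank_mul_le_trace hlower)
  have hnorm : a * ‖v‖ ≤ ‖B v‖ := mul_norm_le_norm_of_mul_norm_sq_le_inner (hlower v)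
  calc
    LinearMap.trace ℝ E B * ⟪B v, v⟫ - ‖B v‖ ^ 2
      ≤ (finrank ℝ E * b) * (b * ‖v‖ ^ 2) - (a * ‖v‖) ^ 2 :=
        sub_le_sub (mul_le_mul htrace (hinner v) hinner_nonneg (htrace_nonneg.trans htrace))
          (pow_le_pow_left₀ (by positivity) hnorm 2)
    _ = finrank ℝ E * b ^ 2 * ‖v‖ ^ 2 - a ^ 2 * ‖v‖ ^ 2 := by ring

theorem finrank_sub_one_mul_norm_sq_nonneg (v : E) :
    0 ≤ ((finrank ℝ E : ℝ) - 1) * ‖v‖ ^ 2 := by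
  rcases eq_or_ne v 0 with rfl | hv
  · simp
  · have : Nontrivial E := nontrivial_of_ne v 0 hv
    have hdim : (1 : ℝ) ≤ finrank ℝ E := mod_cast Module.finrank_pos (R := ℝ) (M := E)
    exact mul_nonneg (sub_nonneg.mpr hdim) (sq_nonneg _)

theorem almost_umbilic_almost_einstein_general {k ε : ℝ} (hε : 0 ≤ ε) (hεk : ε ≤ k)
    (halmost : ∀ v : E, ‖B v - k • v‖ ≤ ε * ‖v‖) (v : E) :
    (finrank ℝ E * (k - ε) ^ 2 * ‖v‖ ^ 2 - (k + ε) ^ 2 * ‖v‖ ^ 2 ≤ ricciForm B v ∧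
      ricciForm B v ≤ finrank ℝ E * (k + ε) ^ 2 * ‖v‖ ^ 2 - (k - ε) ^ 2 * ‖v‖ ^ 2) ∧
    |ricciForm B v - ((finrank ℝ E : ℝ) - 1) * k ^ 2 * ‖v‖ ^ 2|
      ≤ ((2 * (finrank ℝ E : ℝ) + 2) * k * ε + ((finrank ℝ E : ℝ) - 1) * ε ^ 2) * ‖v‖ ^ 2 := by
  have hgap : 0 ≤ k - ε := sub_nonneg.mpr hεk
  have hinner (w : E) : (k - ε) * ‖w‖ ^ 2 ≤ ⟪B w, w⟫ :=
    sub_mul_norm_sq_le_inner_of_norm_sub_smul_le (halmost w)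
  have hnorm (w : E) : ‖B w‖ ≤ (k + ε) * ‖w‖ :=
    norm_le_add_mul_norm_of_norm_sub_smul_le (hε.trans hεk) (halmost w)
  have hlower := le_ricciForm hgap hinner (hnorm v)
  have hupper := ricciForm_le hgap hinner hnorm v
  -- The lower pinching constant is `(n - 1) k² - (2n + 2) k ε + (n - 1) ε²`: its `ε²` term has the
  -- favourable sign and is given away.
  have hslack : 0 ≤ ε ^ 2 * (((finrank ℝ E : ℝ) - 1) * ‖v‖ ^ 2) :=
    mul_nonneg (sq_nonneg ε) (finrank_sub_one_mul_norm_sq_nonneg v)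
  exact ⟨⟨hlower, hupper⟩, abs_le.mpr ⟨by linarith, by linarith⟩⟩

end RicciForm

/-- Pointwise estimate showing that an almost-umbilic hypersurface is
almost-Einstein: if the self-adjoint operator `B` (the shape operator) satisfies
`‖B v - k • v‖ ≤ ε ‖v‖` for all `v`, with `0 ≤ ε ≤ k`, then the "Ricci" quadratic
form `Q(v) = (tr B)·⟪B v, v⟫ - ‖B v‖²` (coming from the once-traced Gauss equation)
is pinched around `(n-1)k²‖v‖²`. -/
theorem almost_umbilic_almost_einstein
    {E : Type*} [NormedAddCommGroup E] [InnerProductSpace ℝ E] [FiniteDimensional ℝ E]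
    (n : ℕ) (hn : 1 ≤ n) (hdim : Module.finrank ℝ E = n)
    (B : E →ₗ[ℝ] E) (hB : LinearMap.IsSymmetric B)
    (k ε : ℝ) (hε : 0 ≤ ε) (hεk : ε ≤ k)
    (halmost : ∀ v : E, ‖B v - k • v‖ ≤ ε * ‖v‖) :
    ∀ v : E,
      ((n : ℝ) * (k - ε) ^ 2 * ‖v‖ ^ 2 - (k + ε) ^ 2 * ‖v‖ ^ 2
          ≤ (LinearMap.trace ℝ E B) * ⟪B v, v⟫ - ‖B v‖ ^ 2 ∧
        (LinearMap.trace ℝ E B) * ⟪B v, v⟫ - ‖B v‖ ^ 2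
          ≤ (n : ℝ) * (k + ε) ^ 2 * ‖v‖ ^ 2 - (k - ε) ^ 2 * ‖v‖ ^ 2) ∧
      |(LinearMap.trace ℝ E B) * ⟪B v, v⟫ - ‖B v‖ ^ 2 - ((n : ℝ) - 1) * k ^ 2 * ‖v‖ ^ 2|
        ≤ ((2 * (n : ℝ) + 2) * k * ε + ((n : ℝ) - 1) * ε ^ 2) * ‖v‖ ^ 2 := by
  subst hdim
  exact almost_umbilic_almost_einstein_general hε hεk halmost
end

section
/- Let n ≥ 2 be a natural number, let B be an n×n real symmetric matrix, and let k be a real number. Set H = tr(B)/n and τ = B - H·I. Then, with ‖·‖_F the Frobenius norm, ‖(tr B)·B - B² - (n-1)·k·I‖_F ≤ (n-2)·|H|·‖τ‖_F + ‖τ‖_F² + (n-1)·√n·|H² - k|. (This is the pointwise estimate, via the identity Ric - (n-1)H²g = (n-2)Hτ - τ², behind the bound ‖Ric - (n-1)k g‖_q ≤ (n-2)‖H‖_∞‖τ‖_{2q} + ‖τ‖²_{2q} + (n-1)√n‖H² - k‖_q in the proof of Theorem 3 of the paper.) -/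
/-- The Frobenius norm of a real square matrix, i.e. the norm associated to
the trace inner product `⟨A, C⟩ = tr(Aᵀ C)`. -/
noncomputable def frobNorm {n : ℕ} (A : Matrix (Fin n) (Fin n) ℝ) : ℝ :=
  Real.sqrt (∑ i, ∑ j, (A i j) ^ 2)

section Algebra

variable {R A : Type*}

/-- For `N` the dimension, `b` the shape operator and `H` the mean curvature, the trace of `b` is
`N * H`, so `(N * H) • b - b * b` is the Ricci tensor by the Gauss equation. -/
lemma ric_sub_einstein_eq [CommRing R] [Ring A] [Algebra R A] (N k : R) {H : R} {b τ : A}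
    (hτ : τ = b - H • (1 : A)) :
    (N * H) • b - b * b - ((N - 1) * k) • (1 : A) =
      ((N - 2) * H) • τ - τ * τ + ((N - 1) * (H ^ 2 - k)) • (1 : A) := by
  obtain rfl : b = τ + H • (1 : A) := by rw [hτ, sub_add_cancel]
  simp only [add_mul, mul_add, smul_mul_assoc, mul_smul_comm, one_mul, mul_one]
  module

lemma norm_ric_sub_einstein_le [NormedField R] [SeminormedRing A] [NormedAlgebra R A] (N k : R)
    {H : R} {b τ : A} (hτ : τ = b - H • (1 : A)) :
    ‖(N * H) • b - b * b - ((N - 1) * k) • (1 : A)‖ ≤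
      ‖N - 2‖ * ‖H‖ * ‖τ‖ + ‖τ‖ ^ 2 + ‖N - 1‖ * ‖(1 : A)‖ * ‖H ^ 2 - k‖ := by
  calc ‖(N * H) • b - b * b - ((N - 1) * k) • (1 : A)‖
      = ‖((N - 2) * H) • τ - τ * τ + ((N - 1) * (H ^ 2 - k)) • (1 : A)‖ := by
        rw [ric_sub_einstein_eq N k hτ]
    _ ≤ ‖((N - 2) * H) • τ‖ + ‖τ * τ‖ + ‖((N - 1) * (H ^ 2 - k)) • (1 : A)‖ :=
        norm_add_le_of_le (norm_sub_le _ _) le_rfl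
    _ ≤ ‖((N - 2) * H) • τ‖ + ‖τ‖ * ‖τ‖ + ‖((N - 1) * (H ^ 2 - k)) • (1 : A)‖ := by
        gcongr
        exact norm_mul_le τ τ
    _ = ‖N - 2‖ * ‖H‖ * ‖τ‖ + ‖τ‖ ^ 2 + ‖N - 1‖ * ‖(1 : A)‖ * ‖H ^ 2 - k‖ := by
        simp only [norm_smul, norm_mul]
        ring

end Algebra

lemma norm_natCast_sub_natCast {𝕜 : Type*} [RCLike 𝕜] {m n : ℕ} (hmn : m ≤ n) :
    ‖(n : 𝕜) - m‖ = n - m := by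
  rw [← Nat.cast_sub hmn, RCLike.norm_natCast, Nat.cast_sub hmn]

section Frobenius

open scoped Matrix.Norms.Frobenius

lemma frobNorm_eq_norm {n : ℕ} (A : Matrix (Fin n) (Fin n) ℝ) : frobNorm A = ‖A‖ := by
  simp [frobNorm, Matrix.frobenius_norm_def, Real.sqrt_eq_rpow]

variable {𝕜 ι : Type*} [RCLike 𝕜] [Fintype ι] [DecidableEq ι]

lemma frobenius_norm_one : ‖(1 : Matrix ι ι 𝕜)‖ = √(Fintype.card ι) := by
  simpa using congrArg NNReal.toReal (Matrix.frobenius_nnnorm_one (n := ι) (α := 𝕜))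

theorem frobNorm_ric_sub_einstein_le_general (hι : 2 ≤ Fintype.card ι) (B : Matrix ι ι 𝕜) (k : 𝕜)
    {H : 𝕜} (hH : H = B.trace / Fintype.card ι)
    {τ : Matrix ι ι 𝕜} (hτ : τ = B - H • (1 : Matrix ι ι 𝕜)) :
    ‖B.trace • B - B * B - (((Fintype.card ι : 𝕜) - 1) * k) • (1 : Matrix ι ι 𝕜)‖ ≤
      ((Fintype.card ι : ℝ) - 2) * ‖H‖ * ‖τ‖ + ‖τ‖ ^ 2 +
        ((Fintype.card ι : ℝ) - 1) * √(Fintype.card ι) * ‖H ^ 2 - k‖ := by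
  have card_ne_zero : (Fintype.card ι : 𝕜) ≠ 0 := Nat.cast_ne_zero.mpr (by lia)
  have trace_eq : B.trace = Fintype.card ι * H := by rw [hH, mul_div_cancel₀ _ card_ne_zero]
  have norm_card_sub_two : ‖(Fintype.card ι : 𝕜) - 2‖ = Fintype.card ι - 2 :=
    mod_cast norm_natCast_sub_natCast (𝕜 := 𝕜) hι
  have norm_card_sub_one : ‖(Fintype.card ι : 𝕜) - 1‖ = Fintype.card ι - 1 :=
    mod_cast norm_natCast_sub_natCast (𝕜 := 𝕜) (one_le_two.trans hι)
  rw [trace_eq, ← norm_card_sub_two, ← norm_card_sub_one, ← frobenius_norm_one (𝕜 := 𝕜)]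
  exact norm_ric_sub_einstein_le _ k hτ

end Frobenius

/-- Pointwise estimate behind the bound
`‖Ric - (n-1)k·g‖_q ≤ (n-2)‖H‖_∞‖τ‖_{2q} + ‖τ‖²_{2q} + (n-1)√n‖H² - k‖_q`:
for a symmetric matrix `B` with `H = tr(B)/n` and `τ = B - H·I`, the matrix
`(tr B)·B - B² - (n-1)k·I` (representing `Ric - (n-1)k·g` by the Gauss equation)
satisfies the stated Frobenius-norm estimate. -/
theorem frobNorm_ric_sub_einstein_le (n : ℕ) (hn : 2 ≤ n)
    (B : Matrix (Fin n) (Fin n) ℝ) (hB : B.IsSymm) (k : ℝ)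
    (H : ℝ) (hH : H = Matrix.trace B / n)
    (τ : Matrix (Fin n) (Fin n) ℝ) (hτ : τ = B - H • (1 : Matrix (Fin n) (Fin n) ℝ)) :
    frobNorm (Matrix.trace B • B - B * B
        - (((n : ℝ) - 1) * k) • (1 : Matrix (Fin n) (Fin n) ℝ))
      ≤ ((n : ℝ) - 2) * |H| * frobNorm τ + (frobNorm τ) ^ 2
          + ((n : ℝ) - 1) * Real.sqrt n * |H ^ 2 - k| := by
  simpa [frobNorm_eq_norm] using
    frobNorm_ric_sub_einstein_le_general (by simpa using hn) B k (by simpa using hH) hτ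
end
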